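/- For any K, K̃ (n_u×n_x) and any symmetric P, P̃ (n_x×n_x), the matrix (1/2)(A+BK+P)ᵀ(A+BK+P) − L_f(K,P;K̃,P̃) − ((A+BK)ᵀP + P(A+BK)) is positive semidefinite; equivalently, (A+BK)ᵀP + P(A+BK) ⪯ (1/2)(A+BK+P)ᵀ(A+BK+P) − L_f(K,P;K̃,P̃) in the Loewner order. -/

import Mathlib

open Matrix

variable {n_x n_u : ℕ}

/-- `f(K,P) = (1/2)(A+BK−P)ᵀ(A+BK−P)`. -/
noncomputable def fMat (A : Matrix (Fin n_x) (Fin n_x) ℝ) (B : Matrix (Fin n_x) (Fin n_u) ℝ)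
    (K : Matrix (Fin n_u) (Fin n_x) ℝ) (P : Matrix (Fin n_x) (Fin n_x) ℝ) :
    Matrix (Fin n_x) (Fin n_x) ℝ :=
  (1 / 2 : ℝ) • ((A + B * K - P)ᵀ * (A + B * K - P))

/-- The linearization `L_f(K,P;K̃,P̃)` of `f` around `(K̃,P̃)`. -/
noncomputable def LfMat (A : Matrix (Fin n_x) (Fin n_x) ℝ) (B : Matrix (Fin n_x) (Fin n_u) ℝ)
    (K : Matrix (Fin n_u) (Fin n_x) ℝ) (P : Matrix (Fin n_x) (Fin n_x) ℝ)
    (K' : Matrix (Fin n_u) (Fin n_x) ℝ) (P' : Matrix (Fin n_x) (Fin n_x) ℝ) :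
    Matrix (Fin n_x) (Fin n_x) ℝ :=
  fMat A B K' P'
    + (1 / 2 : ℝ) • ((B * (K - K') - (P - P'))ᵀ * (A + B * K' - P'))
    + (1 / 2 : ℝ) • ((A + B * K' - P')ᵀ * (B * (K - K') - (P - P')))

/-- For symmetric `P, P̃`, the matrix
`(1/2)(A+BK+P)ᵀ(A+BK+P) − L_f(K,P;K̃,P̃) − ((A+BK)ᵀP + P(A+BK))` is positive
semidefinite, i.e. `(A+BK)ᵀP + P(A+BK) ⪯ (1/2)(A+BK+P)ᵀ(A+BK+P) − L_f(K,P;K̃,P̃)`. -/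
theorem sym_term_le_linearized_block (A : Matrix (Fin n_x) (Fin n_x) ℝ)
    (B : Matrix (Fin n_x) (Fin n_u) ℝ)
    (K K' : Matrix (Fin n_u) (Fin n_x) ℝ) (P P' : Matrix (Fin n_x) (Fin n_x) ℝ)
    (hP : Pᵀ = P) (hP' : P'ᵀ = P') :
    ((1 / 2 : ℝ) • ((A + B * K + P)ᵀ * (A + B * K + P)) - LfMat A B K P K' P'
      - ((A + B * K)ᵀ * P + P * (A + B * K))).PosSemidef := by
  -- With `M = A + BK` and `Pᵀ = P`, expanding gives
  -- `½(M+P)ᵀ(M+P) − (MᵀP + PM) = ½(M−P)ᵀ(M−P) = f(K,P)`. Since `f` is quadratic in the affine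
  -- residual `M − P`, the remainder `f − L_f` is exactly `½ΔᵀΔ`.
  have key : (1 / 2 : ℝ) • ((A + B * K + P)ᵀ * (A + B * K + P)) - LfMat A B K P K' P'
      - ((A + B * K)ᵀ * P + P * (A + B * K))
      = (1 / 2 : ℝ) • ((B * (K - K') - (P - P'))ᵀ * (B * (K - K') - (P - P'))) := by
    unfold LfMat fMat
    simp only [Matrix.mul_sub]
    generalize B * K = X
    generalize B * K' = Y
    simp only [transpose_add, transpose_sub, hP, hP', Matrix.add_mul, Matrix.mul_add,
      Matrix.sub_mul]
    module
  rw [key, ← conjTranspose_eq_transpose_of_trivial]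
  exact (posSemidef_conjTranspose_mul_self _).smul (by norm_num)
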